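/- Let P₀, P∞ be skew-symmetric forms on finite-dimensional complex V with ∞ ∉ Λ (i.e. P∞ has the generic corank r), and let R = P∞^{-1}P₀ be the recursion operator on L^⊥/L. Then for each λ ∈ Λ the λ-eigenspace of R equals (Ker P_λ)/(Ker P_λ ∩ L), and the spectrum of R equals Λ ∩ ℂ. -/

import Mathlib

open Module LinearMap

variable {V : Type*} [AddCommGroup V] [Module ℂ V]

/-- The pencil `P_λ = P₀ - λ P_∞` of bilinear forms, `λ ∈ ℂ ∪ {∞}` (`∞` is `none`,
with `P_∞ := P∞`). -/
noncomputable def pencil (P0 Pinf : V →ₗ[ℂ] V →ₗ[ℂ] ℂ) : Option ℂ → (V →ₗ[ℂ] V →ₗ[ℂ] ℂ)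
  | none => Pinf
  | some l => P0 - l • Pinf

/-- The generic (minimal) corank `r` of the pencil. -/
noncomputable def genericCorank (P0 Pinf : V →ₗ[ℂ] V →ₗ[ℂ] ℂ) : ℕ :=
  sInf (Set.range fun l : Option ℂ => finrank ℂ ↥(LinearMap.ker (pencil P0 Pinf l)))

/-- The exceptional set `Λ` of pencil parameters where the corank exceeds `r`. -/
def exceptional (P0 Pinf : V →ₗ[ℂ] V →ₗ[ℂ] ℂ) : Set (Option ℂ) :=
  {l | genericCorank P0 Pinf < finrank ℂ ↥(LinearMap.ker (pencil P0 Pinf l))}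

/-- `L = Σ_{λ ∉ Λ} Ker P_λ`. -/
noncomputable def Lspace (P0 Pinf : V →ₗ[ℂ] V →ₗ[ℂ] ℂ) : Submodule ℂ V :=
  ⨆ l ∈ {l : Option ℂ | l ∉ exceptional P0 Pinf}, LinearMap.ker (pencil P0 Pinf l)

/-- The common skew-orthogonal complement `L^⊥` (computed here with `P_∞`). -/
noncomputable def Lperp (P0 Pinf : V →ₗ[ℂ] V →ₗ[ℂ] ℂ) : Submodule ℂ V :=
  LinearMap.BilinForm.orthogonal (pencil P0 Pinf none) (Lspace P0 Pinf)

/-- `L` viewed as a submodule of `L^⊥`. -/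
noncomputable def LinPerp (P0 Pinf : V →ₗ[ℂ] V →ₗ[ℂ] ℂ) : Submodule ℂ ↥(Lperp P0 Pinf) :=
  (Lspace P0 Pinf).comap (Lperp P0 Pinf).subtype

/-- The quotient `L^⊥ / L`, carrying the recursion operator `R = P_∞⁻¹ P₀`. -/
abbrev Qspace (P0 Pinf : V →ₗ[ℂ] V →ₗ[ℂ] ℂ) := ↥(Lperp P0 Pinf) ⧸ LinPerp P0 Pinf

theorem aux_limit {V : Type*} [AddCommGroup V] [Module ℂ V] [FiniteDimensional ℂ V]
    (K : V →ₗ[ℂ] V) (f : V →ₗ[ℂ] ℂ) (v0 : V)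
    (h : ∀ t : ℂ, t ≠ 0 → LinearMap.det (LinearMap.id - t • K) ≠ 0 → ∀ (y : V) (c : ℂ),
      y - t • K y = c • v0 → f y = 0) : f v0 = 0 := by
  classical
  let b := Module.finBasis ℂ V
  let M := LinearMap.toMatrix b b K
  let N : ℂ → Matrix (Fin (finrank ℂ V)) (Fin (finrank ℂ V)) ℂ := fun t => 1 - t • M
  let T : ℂ → (V →ₗ[ℂ] V) := fun t => Matrix.toLin b b (N t).adjugate
  have hN : ∀ t, LinearMap.toMatrix b b (LinearMap.id - t • K) = N t := by
    intro t
    simp [N, M, LinearMap.toMatrix_id]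
  have hN' : ∀ t, Matrix.toLin b b (N t) = LinearMap.id - t • K := by
    intro t
    rw [← hN t, Matrix.toLin_toMatrix]
  have hNc : Continuous N := by
    dsimp only [N]
    fun_prop
  have hdet : Continuous fun t => (N t).det := hNc.matrix_det
  have hg : Continuous fun t => f (T t v0) := by
    have e : (fun t => f (T t v0)) =
        fun t => ∑ i, ((N t).adjugate.mulVec (b.repr v0)) i * f (b i) := by
      funext t
      simp only [T, Matrix.toLin_apply, map_sum, map_smul, smul_eq_mul]
    rw [e]
    have h1 : Continuous fun t => (N t).adjugate.mulVec (b.repr v0) :=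
      hNc.matrix_adjugate.matrix_mulVec continuous_const
    exact continuous_finsetSum _ fun i _ => ((continuous_apply i).comp h1).mul continuous_const
  have hz : ∀ t, t ≠ 0 → (N t).det ≠ 0 → f (T t v0) = 0 := by
    intro t ht hd
    refine h t ht ?_ (T t v0) (N t).det ?_
    · rw [← LinearMap.det_toMatrix b, hN]; exact hd
    · have : (Matrix.toLin b b (N t)) (T t v0) = (N t).det • v0 := by
        dsimp only [T]
        rw [← LinearMap.comp_apply, ← Matrix.toLin_mul, Matrix.mul_adjugate]
        simp
      rw [hN'] at this
      simpa using this
  have hev : ∀ᶠ t in nhdsWithin (0:ℂ) {0}ᶜ, f (T t v0) = 0 := by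
    have h1 : ∀ᶠ t in nhds (0:ℂ), (N t).det ≠ 0 := by
      apply hdet.continuousAt.eventually_ne
      simp [N]
    filter_upwards [nhdsWithin_le_nhds h1, self_mem_nhdsWithin] with t h2 h3
    exact hz t h3 h2
  have l1 : Filter.Tendsto (fun t => f (T t v0)) (nhdsWithin (0:ℂ) {0}ᶜ) (nhds (f (T 0 v0))) :=
    (hg.tendsto 0).mono_left nhdsWithin_le_nhds
  have l2 : Filter.Tendsto (fun t => f (T t v0)) (nhdsWithin (0:ℂ) {0}ᶜ) (nhds 0) :=
    tendsto_const_nhds.congr' (hev.mono fun t ht => ht.symm)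
  have := tendsto_nhds_unique l1 l2
  simpa [T, N] using this

theorem aux_ginv {V W : Type*} [AddCommGroup V] [Module ℂ V] [AddCommGroup W] [Module ℂ W]
    (B : V →ₗ[ℂ] W) : ∃ S : W →ₗ[ℂ] V, (∀ x, B (S (B x)) = B x) ∧ ∀ y, S (B (S y)) = S y := by
  obtain ⟨g, hg⟩ := B.rangeRestrict.exists_rightInverse_of_surjective B.range_rangeRestrict
  obtain ⟨p, hp⟩ := (LinearMap.range B).subtype.exists_leftInverse_of_injective
    (Submodule.ker_subtype _)
  have hg' : ∀ z, B (g z) = z := fun z => congrArg Subtype.val (LinearMap.congr_fun hg z)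
  have hp' : ∀ z : LinearMap.range B, p z = z := fun z => LinearMap.congr_fun hp z
  refine ⟨g.comp p, fun x => ?_, fun y => ?_⟩
  · simp only [LinearMap.comp_apply, hg']
    have := hp' ⟨B x, LinearMap.mem_range_self B x⟩
    simpa using congrArg Subtype.val this
  · simp only [LinearMap.comp_apply, hg', hp']

theorem aux_gen_le {V : Type*} [AddCommGroup V] [Module ℂ V] (P0 Pinf : V →ₗ[ℂ] V →ₗ[ℂ] ℂ)
    (l : Option ℂ) : genericCorank P0 Pinf ≤ finrank ℂ (LinearMap.ker (pencil P0 Pinf l)) :=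
  Nat.sInf_le ⟨l, rfl⟩

theorem aux_reg {V : Type*} [AddCommGroup V] [Module ℂ V] {P0 Pinf : V →ₗ[ℂ] V →ₗ[ℂ] ℂ}
    {l : Option ℂ} (h : l ∉ exceptional P0 Pinf) :
    finrank ℂ (LinearMap.ker (pencil P0 Pinf l)) = genericCorank P0 Pinf :=
  le_antisymm (not_lt.1 h) (aux_gen_le _ _ _)

theorem aux_ker_le {V : Type*} [AddCommGroup V] [Module ℂ V] {P0 Pinf : V →ₗ[ℂ] V →ₗ[ℂ] ℂ}
    {l : Option ℂ} (h : l ∉ exceptional P0 Pinf) :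
    LinearMap.ker (pencil P0 Pinf l) ≤ Lspace P0 Pinf :=
  le_iSup₂_of_le (f := fun (l : Option ℂ) (_ : l ∈ {l : Option ℂ | l ∉ exceptional P0 Pinf}) =>
    LinearMap.ker (pencil P0 Pinf l)) l h le_rfl

/-- A functional killing all finite regular kernels kills `Ker P_∞`. -/
theorem aux_kerinf {V : Type*} [AddCommGroup V] [Module ℂ V] [FiniteDimensional ℂ V]
    (P0 Pinf : V →ₗ[ℂ] V →ₗ[ℂ] ℂ) (hinfreg : none ∉ exceptional P0 Pinf) (f : V →ₗ[ℂ] ℂ)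
    (hf : ∀ l : ℂ, some l ∉ exceptional P0 Pinf →
      ∀ u ∈ LinearMap.ker (pencil P0 Pinf (some l)), f u = 0)
    (v0 : V) (hv0 : Pinf v0 = 0) : f v0 = 0 := by
  obtain ⟨S, hS1, hS2⟩ := aux_ginv Pinf
  refine aux_limit (S.comp P0) f v0 ?_
  intro t ht hd y c hy
  simp only [LinearMap.comp_apply] at hy
  set T : V →ₗ[ℂ] V := LinearMap.id - t • (S.comp P0) with hT
  have hTinj : Function.Injective T := by
    exact (LinearMap.equivOfDetNeZero T hd).injective
  set Z := LinearMap.ker (S.comp (Pinf - t • P0)) with hZ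
  have hZmem : ∀ x, x ∈ Z ↔ S (Pinf x) = t • S (P0 x) := by
    intro x; simp [hZ, sub_eq_zero]
  have hZle : finrank ℂ Z ≤ genericCorank P0 Pinf := by
    rw [← aux_reg hinfreg, ← (Submodule.equivMapOfInjective T hTinj Z).symm.finrank_eq]
    apply Submodule.finrank_mono
    rintro _ ⟨x, hx, rfl⟩
    have hx' := (hZmem x).1 hx
    simp only [pencil, LinearMap.mem_ker, hT]
    simp [← hx', hS1]
  have hker : LinearMap.ker (pencil P0 Pinf (some t⁻¹)) ≤ Z := by
    intro x hx
    have hx : P0 x - t⁻¹ • Pinf x = 0 := by simpa [pencil] using hx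
    rw [hZmem, ← map_smul, sub_eq_zero.1 hx, smul_smul, mul_inv_cancel₀ ht, one_smul]
  have hreg : some t⁻¹ ∉ exceptional P0 Pinf :=
    not_lt.2 ((Submodule.finrank_mono hker).trans hZle)
  have heq : LinearMap.ker (pencil P0 Pinf (some t⁻¹)) = Z :=
    Submodule.eq_of_le_of_finrank_le hker (hZle.trans (aux_gen_le _ _ _))
  refine hf _ hreg y ?_
  rw [heq, hZmem]
  have h3 := congrArg (fun z => S (Pinf z)) hy
  simp only [map_sub, map_smul, hS2, hv0, map_zero, smul_zero] at h3
  exact sub_eq_zero.1 h3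

theorem aux_L_kill {V : Type*} [AddCommGroup V] [Module ℂ V]
    (P0 Pinf : V →ₗ[ℂ] V →ₗ[ℂ] ℂ) (f : V →ₗ[ℂ] ℂ)
    (hf : ∀ l, l ∉ exceptional P0 Pinf →
      ∀ u ∈ LinearMap.ker (pencil P0 Pinf l), f u = 0)
    (u : V) (hu : u ∈ Lspace P0 Pinf) : f u = 0 := by
  have : Lspace P0 Pinf ≤ LinearMap.ker f := iSup₂_le fun l hl u hu => hf l hl u hu
  exact this hu

theorem aux_isRefl {V : Type*} [AddCommGroup V] [Module ℂ V] {P : V →ₗ[ℂ] V →ₗ[ℂ] ℂ}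
    (hP : ∀ v, P v v = 0) : LinearMap.BilinForm.IsRefl P :=
  LinearMap.BilinForm.IsAlt.isRefl (B₁ := P) hP

theorem aux_top {V : Type*} [AddCommGroup V] [Module ℂ V] {P : V →ₗ[ℂ] V →ₗ[ℂ] ℂ}
    (hP : ∀ v, P v v = 0) : LinearMap.BilinForm.orthogonal P ⊤ = LinearMap.ker P := by
  ext x
  simp only [LinearMap.BilinForm.mem_orthogonal_iff, LinearMap.mem_ker]
  constructor
  · intro h
    ext y
    exact aux_isRefl hP _ _ (h y trivial)
  · intro h y _
    exact aux_isRefl hP _ _ (by simp [h])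

theorem aux_dim {V : Type*} [AddCommGroup V] [Module ℂ V] [FiniteDimensional ℂ V]
    {P : V →ₗ[ℂ] V →ₗ[ℂ] ℂ} (hP : ∀ v, P v v = 0) (W : Submodule ℂ V) :
    finrank ℂ W + finrank ℂ (LinearMap.BilinForm.orthogonal P W) =
      finrank ℂ V + finrank ℂ (W ⊓ LinearMap.ker P : Submodule ℂ V) := by
  rw [← aux_top hP]
  exact LinearMap.BilinForm.finrank_add_finrank_orthogonal (aux_isRefl hP) W

theorem aux_double {V : Type*} [AddCommGroup V] [Module ℂ V] [FiniteDimensional ℂ V]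
    {P : V →ₗ[ℂ] V →ₗ[ℂ] ℂ} (hP : ∀ v, P v v = 0) (L : Submodule ℂ V) (x : V)
    (hx : ∀ y ∈ LinearMap.BilinForm.orthogonal P L, P x y = 0) : x ∈ L ⊔ LinearMap.ker P := by
  set W := L ⊔ LinearMap.ker P with hW
  have hr := aux_isRefl hP
  have hK : LinearMap.ker P ≤ LinearMap.BilinForm.orthogonal P W := by
    rw [← aux_top hP]
    exact LinearMap.BilinForm.orthogonal_le le_top
  have h1 := aux_dim hP W
  have h2 := aux_dim hP (LinearMap.BilinForm.orthogonal P W)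
  rw [inf_eq_right.2 (le_sup_right : LinearMap.ker P ≤ W)] at h1
  rw [inf_eq_right.2 hK] at h2
  have h3 : W ≤ LinearMap.BilinForm.orthogonal P (LinearMap.BilinForm.orthogonal P W) :=
    LinearMap.BilinForm.le_orthogonal_orthogonal hr
  have h4 := Submodule.eq_of_le_of_finrank_le h3 (by omega)
  rw [h4]
  intro y hy
  exact hr _ _ (hx y (LinearMap.BilinForm.orthogonal_le le_sup_left hy))

theorem aux_alt {V : Type*} [AddCommGroup V] [Module ℂ V] {P0 Pinf : V →ₗ[ℂ] V →ₗ[ℂ] ℂ}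
    (h0 : ∀ v, P0 v v = 0) (hinf : ∀ v, Pinf v v = 0) (l : Option ℂ) (v : V) :
    pencil P0 Pinf l v v = 0 := by
  cases l <;> simp [pencil, h0, hinf]

theorem aux_perp {V : Type*} [AddCommGroup V] [Module ℂ V] [FiniteDimensional ℂ V]
    {P0 Pinf : V →ₗ[ℂ] V →ₗ[ℂ] ℂ}
    (h0 : ∀ v, P0 v v = 0) (hinf : ∀ v, Pinf v v = 0)
    (hinfreg : none ∉ exceptional P0 Pinf) (μ : ℂ) :
    Lperp P0 Pinf =
      LinearMap.BilinForm.orthogonal (pencil P0 Pinf (some μ)) (Lspace P0 Pinf) := by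
  have hle : Lperp P0 Pinf ≤
      LinearMap.BilinForm.orthogonal (pencil P0 Pinf (some μ)) (Lspace P0 Pinf) := by
    intro w hw
    have hw' : ∀ u ∈ Lspace P0 Pinf, Pinf u w = 0 := hw
    have hfin : ∀ l : ℂ, some l ∉ exceptional P0 Pinf →
        ∀ u ∈ LinearMap.ker (pencil P0 Pinf (some l)), P0.flip w u = 0 := by
      intro l hl u hu
      have h1 := hw' u (aux_ker_le hl hu)
      have h2 := LinearMap.congr_fun (LinearMap.mem_ker.1 hu) w
      simpa [pencil, h1] using h2
    intro u hu
    have hA : P0.flip w u = 0 := by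
      refine aux_L_kill P0 Pinf (P0.flip w) ?_ u hu
      rintro (_ | l) hl v hv
      · exact aux_kerinf P0 Pinf hinfreg _ hfin v hv
      · exact hfin l hl v hv
    have hA' : P0 u w = 0 := hA
    show pencil P0 Pinf (some μ) u w = 0
    simp [pencil, hA', hw' u hu]
  by_cases hμ : some μ ∈ exceptional P0 Pinf
  · refine le_antisymm hle ?_
    intro w hw u hu
    have hw' : ∀ u ∈ Lspace P0 Pinf, pencil P0 Pinf (some μ) u w = 0 := hw
    show Pinf.flip w u = 0
    refine aux_L_kill P0 Pinf (Pinf.flip w) ?_ u hu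
    rintro (_ | l) hl v hv
    · have hv : Pinf v = 0 := hv
      simp [hv]
    · have hne : l ≠ μ := by rintro rfl; exact hl hμ
      have h1 := hw' v (aux_ker_le hl hv)
      have h2 := LinearMap.congr_fun (LinearMap.mem_ker.1 hv) w
      simp only [pencil, LinearMap.sub_apply, LinearMap.smul_apply, smul_eq_mul,
        LinearMap.zero_apply] at h1 h2
      have h3 : (l - μ) * Pinf v w = 0 := by linear_combination h1 - h2
      exact (mul_eq_zero.1 h3).resolve_left (sub_ne_zero.2 hne)
  · refine Submodule.eq_of_le_of_finrank_le hle ?_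
    have d1 := aux_dim (aux_alt h0 hinf (some μ)) (Lspace P0 Pinf)
    have d2 := aux_dim (aux_alt h0 hinf none) (Lspace P0 Pinf)
    rw [inf_eq_right.2 (aux_ker_le hμ), aux_reg hμ] at d1
    rw [inf_eq_right.2 (aux_ker_le hinfreg), aux_reg hinfreg] at d2
    change _ + finrank ℂ (Lperp P0 Pinf) = _ at d2
    omega

theorem aux_eig {V : Type*} [AddCommGroup V] [Module ℂ V] [FiniteDimensional ℂ V]
    (P0 Pinf : V →ₗ[ℂ] V →ₗ[ℂ] ℂ)
    (h0 : ∀ v, P0 v v = 0) (hinf : ∀ v, Pinf v v = 0)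
    (hinfreg : none ∉ exceptional P0 Pinf)
    (R : Qspace P0 Pinf →ₗ[ℂ] Qspace P0 Pinf)
    (hR : ∀ ξ ξ' : ↥(Lperp P0 Pinf),
      R (Submodule.Quotient.mk ξ) = Submodule.Quotient.mk ξ' →
      ∀ η : ↥(Lperp P0 Pinf),
        pencil P0 Pinf none (ξ' : V) (η : V) = pencil P0 Pinf (some 0) (ξ : V) (η : V)) (μ : ℂ) :
      Module.End.eigenspace R μ =
        Submodule.map (LinPerp P0 Pinf).mkQ
          ((LinearMap.ker (pencil P0 Pinf (some μ))).comap (Lperp P0 Pinf).subtype) := by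
  have hperp := aux_perp h0 hinf hinfreg μ
  ext q
  obtain ⟨ξ, rfl⟩ := Submodule.Quotient.mk_surjective _ q
  rw [Module.End.mem_eigenspace_iff]
  constructor
  · intro h
    rw [← Submodule.Quotient.mk_smul] at h
    have h1 := hR ξ (μ • ξ) h
    have h2 : (ξ : V) ∈ Lspace P0 Pinf ⊔ LinearMap.ker (pencil P0 Pinf (some μ)) := by
      refine aux_double (aux_alt h0 hinf (some μ)) _ _ ?_
      intro y hy
      rw [← hperp] at hy
      have := h1 ⟨y, hy⟩
      simp only [pencil, Submodule.coe_smul, map_smul, LinearMap.smul_apply, zero_smul,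
        sub_zero] at this
      simp [pencil, ← this]
    obtain ⟨l, hl, k, hk, hlk⟩ := Submodule.mem_sup.1 h2
    have hkp : k ∈ Lperp P0 Pinf := by
      rw [hperp]
      rw [← aux_top (aux_alt h0 hinf (some μ))] at hk
      exact LinearMap.BilinForm.orthogonal_le le_top hk
    refine ⟨⟨k, hkp⟩, hk, ?_⟩
    rw [Submodule.mkQ_apply, Submodule.Quotient.eq]
    show k - (ξ : V) ∈ Lspace P0 Pinf
    rw [← hlk, sub_add_cancel_right]
    exact neg_mem hl
  · rintro ⟨k, hk, hkξ⟩
    rw [← hkξ, Submodule.mkQ_apply]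
    obtain ⟨ξ', hξ'⟩ := Submodule.Quotient.mk_surjective _ (R (Submodule.Quotient.mk k))
    have h1 := hR k ξ' hξ'.symm
    rw [← hξ', ← Submodule.Quotient.mk_smul, Submodule.Quotient.eq]
    show (ξ' : V) - μ • (k : V) ∈ Lspace P0 Pinf
    have h2 : (ξ' : V) - μ • (k : V) ∈ Lspace P0 Pinf ⊔ LinearMap.ker (pencil P0 Pinf none) := by
      refine aux_double (aux_alt h0 hinf none) _ _ ?_
      intro y hy
      have h3 := h1 ⟨y, hy⟩
      have hk' : pencil P0 Pinf (some μ) (k : V) = 0 := hk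
      have h4 := LinearMap.congr_fun hk' y
      simp only [pencil, LinearMap.sub_apply, LinearMap.smul_apply, smul_eq_mul,
        LinearMap.zero_apply, zero_smul, sub_zero, map_sub, map_smul] at h3 h4 ⊢
      linear_combination h3 + h4
    rwa [sup_eq_left.2 (aux_ker_le hinfreg)] at h2

/-- The `λ`-eigenspace of the recursion operator `R = P_∞⁻¹P₀` on `L^⊥/L` equals
`(Ker P_λ)/(Ker P_λ ∩ L)`, and the spectrum of `R` equals `Λ ∩ ℂ`. -/
theorem stmt13 [FiniteDimensional ℂ V] (P0 Pinf : V →ₗ[ℂ] V →ₗ[ℂ] ℂ)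
    (h0 : ∀ v, P0 v v = 0) (hinf : ∀ v, Pinf v v = 0)
    (hinfreg : none ∉ exceptional P0 Pinf)
    (R : Qspace P0 Pinf →ₗ[ℂ] Qspace P0 Pinf)
    (hR : ∀ ξ ξ' : ↥(Lperp P0 Pinf),
      R (Submodule.Quotient.mk ξ) = Submodule.Quotient.mk ξ' →
      ∀ η : ↥(Lperp P0 Pinf),
        pencil P0 Pinf none (ξ' : V) (η : V) = pencil P0 Pinf (some 0) (ξ : V) (η : V)) :
    (∀ μ : ℂ, (some μ : Option ℂ) ∈ exceptional P0 Pinf →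
      Module.End.eigenspace R μ =
        Submodule.map (LinPerp P0 Pinf).mkQ
          ((LinearMap.ker (pencil P0 Pinf (some μ))).comap (Lperp P0 Pinf).subtype)) ∧
    (∀ μ : ℂ, Module.End.HasEigenvalue R μ ↔ (some μ : Option ℂ) ∈ exceptional P0 Pinf) := by
  refine ⟨fun μ _ => aux_eig P0 Pinf h0 hinf hinfreg R hR μ, fun μ => ?_⟩
  rw [Module.End.hasEigenvalue_iff, aux_eig P0 Pinf h0 hinf hinfreg R hR μ]
  have hperp := aux_perp h0 hinf hinfreg μ
  constructor
  · intro h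
    by_contra hμ
    apply h
    rw [eq_bot_iff]
    rintro _ ⟨k, hk, rfl⟩
    rw [Submodule.mem_bot, Submodule.mkQ_apply, Submodule.Quotient.mk_eq_zero]
    exact aux_ker_le hμ hk
  · intro hμ h
    have hkL : LinearMap.ker (pencil P0 Pinf (some μ)) ≤ Lspace P0 Pinf := by
      intro k hk
      have hkp : k ∈ Lperp P0 Pinf := by
        rw [hperp]
        have hk' := hk
        rw [← aux_top (aux_alt h0 hinf (some μ))] at hk'
        exact LinearMap.BilinForm.orthogonal_le le_top hk'
      have h1 : (LinPerp P0 Pinf).mkQ ⟨k, hkp⟩ ∈ Submodule.map (LinPerp P0 Pinf).mkQ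
          ((LinearMap.ker (pencil P0 Pinf (some μ))).comap (Lperp P0 Pinf).subtype) :=
        ⟨⟨k, hkp⟩, hk, rfl⟩
      rw [h, Submodule.mem_bot, Submodule.mkQ_apply, Submodule.Quotient.mk_eq_zero] at h1
      exact h1
    have d1 := aux_dim (aux_alt h0 hinf (some μ)) (Lspace P0 Pinf)
    have d2 := aux_dim (aux_alt h0 hinf none) (Lspace P0 Pinf)
    rw [inf_eq_right.2 hkL, ← hperp] at d1
    rw [inf_eq_right.2 (aux_ker_le hinfreg), aux_reg hinfreg] at d2
    change _ + finrank ℂ (Lperp P0 Pinf) = _ at d2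
    have hμ' : genericCorank P0 Pinf < finrank ℂ (LinearMap.ker (pencil P0 Pinf (some μ))) := hμ
    omega
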